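/- Let n ≥ 2 and let X be B or C; let A be the Cartan matrix of type X_n and ι an admissible sequence adapted to A. Then the set Tab_{X,ι} of column tableaux of type X is closed under the action of all operators S_{m,j}: for every T ∈ Tab_{X,ι}, every m ≥ 1 and every j ∈ I, one has S_{m,j}T ∈ Tab_{X,ι}. -/

import Mathlib

noncomputable section

/-- The coordinate linear form `x_k` (as a coefficient vector). -/
def xc (k : ℕ) : ℕ → ℚ := fun l => if l = k then 1 else 0

/-- Cartan matrix of type `A_n`. -/
def cartanA (_n : ℕ) (i j : ℕ) : ℤ :=
  if i = j then 2 else if i + 1 = j ∨ j + 1 = i then -1 else 0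

/-- Cartan matrix of type `B_n`. -/
def cartanB (n : ℕ) (i j : ℕ) : ℤ :=
  if i = j then 2
  else if i = n ∧ j = n - 1 then -2
  else if i + 1 = j ∨ j + 1 = i then -1 else 0

/-- Cartan matrix of type `C_n`. -/
def cartanC (n : ℕ) (i j : ℕ) : ℤ :=
  if i = j then 2
  else if i = n - 1 ∧ j = n then -2
  else if i + 1 = j ∨ j + 1 = i then -1 else 0

/-- Cartan matrix of type `D_n`. -/
def cartanD (n : ℕ) (i j : ℕ) : ℤ :=
  if i = j then 2
  else if (i = n - 1 ∧ j = n) ∨ (i = n ∧ j = n - 1) then 0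
  else if (i + 1 = j ∨ j + 1 = i) ∨ (i = n ∧ j = n - 2) ∨ (i = n - 2 ∧ j = n) then -1
  else 0

/-- `ι` (with positions indexed by `k ≥ 1`) takes values in `{1,…,n}`, has no two equal
consecutive entries, and every index occurs infinitely often. -/
def Admissible (n : ℕ) (ι : ℕ → ℕ) : Prop :=
  (∀ k, 1 ≤ k → 1 ≤ ι k ∧ ι k ≤ n) ∧
  (∀ k, 1 ≤ k → ι k ≠ ι (k + 1)) ∧
  (∀ i, 1 ≤ i → i ≤ n → ∀ N, ∃ k, N ≤ k ∧ ι k = i)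

/-- `k^+`: the next position after `k` carrying the same letter. -/
def kplus (ι : ℕ → ℕ) (k : ℕ) : ℕ := sInf {l | k < l ∧ ι l = ι k}

/-- `k^-`: the previous position (`≥ 1`) carrying the same letter, `0` if none. -/
def kminus (ι : ℕ → ℕ) (k : ℕ) : ℕ := sSup {l | 0 < l ∧ l < k ∧ ι l = ι k}

/-- The linear form `β_k` (with `β_0 = 0`). -/
def beta (A : ℕ → ℕ → ℤ) (ι : ℕ → ℕ) (k : ℕ) : ℕ → ℚ :=
  if k = 0 then 0
  else xc k + (∑ j ∈ Finset.Ioo k (kplus ι k), (A (ι k) (ι j) : ℚ) • xc j) + xc (kplus ι k)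

/-- The piecewise-linear operator `S_k`. -/
def Sop (A : ℕ → ℕ → ℤ) (ι : ℕ → ℕ) (k : ℕ) (φ : ℕ → ℚ) : ℕ → ℚ :=
  if 0 < φ k then φ - φ k • beta A ι k
  else φ - φ k • beta A ι (kminus ι k)

/-- Membership in `Ξ_ι`: forms obtained from some `x_{j_0}` by finitely many operators `S_k`. -/
inductive XiMem (A : ℕ → ℕ → ℤ) (ι : ℕ → ℕ) : (ℕ → ℚ) → Prop
  | base (k : ℕ) (hk : 1 ≤ k) : XiMem A ι (xc k)
  | step (k : ℕ) (hk : 1 ≤ k) (φ : ℕ → ℚ) (h : XiMem A ι φ) : XiMem A ι (Sop A ι k φ)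

/-- The set `Ξ_ι`. -/
def Xi (A : ℕ → ℕ → ℤ) (ι : ℕ → ℕ) : Set (ℕ → ℚ) := { φ | XiMem A ι φ }

/-- Forms obtained from a set `g` of generators by finitely many operators `S_k`. -/
inductive XiMemFrom (A : ℕ → ℕ → ℤ) (ι : ℕ → ℕ) (g : Set (ℕ → ℚ)) : (ℕ → ℚ) → Prop
  | base (φ : ℕ → ℚ) (h : φ ∈ g) : XiMemFrom A ι g φ
  | step (k : ℕ) (hk : 1 ≤ k) (φ : ℕ → ℚ) (h : XiMemFrom A ι g φ) :
      XiMemFrom A ι g (Sop A ι k φ)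

/-- `ι` is adapted to the Cartan matrix `A`: for `i ≠ j` with `a_{i,j} ≠ 0`, consecutive
members of the subsequence of `ι` consisting of the letters `i`, `j` are distinct. -/
def Adapted (n : ℕ) (A : ℕ → ℕ → ℤ) (ι : ℕ → ℕ) : Prop :=
  ∀ i j, 1 ≤ i → i ≤ n → 1 ≤ j → j ≤ n → i ≠ j → A i j ≠ 0 →
    ∀ k l, 1 ≤ k → k < l → (ι k = i ∨ ι k = j) → (ι l = i ∨ ι l = j) →
      (∀ m, k < m → m < l → ι m ≠ i ∧ ι m ≠ j) → ι k ≠ ι l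

/-- Position of the first occurrence of the letter `i` in `ι`. -/
def firstOcc (ι : ℕ → ℕ) (i : ℕ) : ℕ := sInf {k | 1 ≤ k ∧ ι k = i}

/-- `p_{i,j} = 1` iff the first occurrence of `i` precedes the first occurrence of `j`. -/
def pval (ι : ℕ → ℕ) (i j : ℕ) : ℕ := if firstOcc ι i < firstOcc ι j then 1 else 0

/-- The function `P(k)` for types A, B, C (and `P(k) = 0` for `k > n`, `k ≤ 1`). -/
def PABC (ι : ℕ → ℕ) (n k : ℕ) : ℕ :=
  if k ≤ n then ∑ t ∈ Finset.Icc 2 k, pval ι t (t - 1) else 0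

/-- The function `P(k)` for type D. -/
def PD (ι : ℕ → ℕ) (n k : ℕ) : ℕ :=
  if k = n then (∑ t ∈ Finset.Icc 2 (n - 2), pval ι t (t - 1)) + pval ι n (n - 2)
  else if k ≤ n then ∑ t ∈ Finset.Icc 2 k, pval ι t (t - 1) else 0

/-- `occPos ι j s`: the position of the `s`-th occurrence of the letter `j` in `ι`
(`0` for `s = 0`). -/
def occPos (ι : ℕ → ℕ) (j : ℕ) : ℕ → ℕ
  | 0 => 0
  | s + 1 => sInf {k | occPos ι j s < k ∧ ι k = j}

/-- The double-indexed coordinate form `x_{s,j}`, with the conventions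
`x_{s,0} = x_{s,n+1} = 0` and `x_{s,j} = 0` for `s ≤ 0`. -/
def xsj (ι : ℕ → ℕ) (n : ℕ) (s : ℤ) (j : ℕ) : ℕ → ℚ :=
  if 1 ≤ s ∧ 1 ≤ j ∧ j ≤ n then xc (occPos ι j s.toNat) else 0

/-- The double-indexed form `β_{s,j}`. -/
def betasj (A : ℕ → ℕ → ℤ) (ι : ℕ → ℕ) (s : ℤ) (j : ℕ) : ℕ → ℚ :=
  beta A ι (occPos ι j s.toNat)

/-- The double-indexed operator `S_{m,j}`. -/
def Ssj (A : ℕ → ℕ → ℤ) (ι : ℕ → ℕ) (m j : ℕ) (φ : ℕ → ℚ) : ℕ → ℚ :=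
  Sop A ι (occPos ι j m) φ

/- Entries of the ordered sets `J_X` are encoded as natural numbers:
an unbarred entry `j ∈ {1,…,n}` is encoded as `j`, a barred entry `j̄` is
encoded as `2n+1-j` (so that `n̄ = n+1, …, 1̄ = 2n` and the total order of
`J_B = J_C` is the numerical order), and the extra symbol `ovl(n+1)` of
types C and D is encoded as `0`. -/

/-- The box of type A. -/
def boxA (ι : ℕ → ℕ) (n : ℕ) (s : ℤ) (j : ℕ) : ℕ → ℚ :=
  xsj ι n (s + (PABC ι n j : ℤ)) j - xsj ι n (s + (PABC ι n (j - 1) : ℤ) + 1) (j - 1)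

/-- The box of type B. -/
def boxB (ι : ℕ → ℕ) (n : ℕ) (s : ℤ) (e : ℕ) : ℕ → ℚ :=
  if e ≤ n then
    xsj ι n (s + (PABC ι n e : ℤ)) e - xsj ι n (s + (PABC ι n (e - 1) : ℤ) + 1) (e - 1)
  else
    xsj ι n (s + (PABC ι n (2 * n - e) : ℤ) + (n : ℤ) - ((2 * n + 1 - e : ℕ) : ℤ) + 1)
        (2 * n - e)
      - xsj ι n (s + (PABC ι n (2 * n + 1 - e) : ℤ) + (n : ℤ) - ((2 * n + 1 - e : ℕ) : ℤ) + 1)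
          (2 * n + 1 - e)

/-- The box of type C (`ovl(n+1)` encoded as `0`). -/
def boxC (ι : ℕ → ℕ) (n : ℕ) (s : ℤ) (e : ℕ) : ℕ → ℚ :=
  if e = 0 then xsj ι n (s + (PABC ι n n : ℤ)) n
  else if e < n then
    xsj ι n (s + (PABC ι n e : ℤ)) e - xsj ι n (s + (PABC ι n (e - 1) : ℤ) + 1) (e - 1)
  else if e = n then
    (2 : ℚ) • xsj ι n (s + (PABC ι n n : ℤ)) n
      - xsj ι n (s + (PABC ι n (n - 1) : ℤ) + 1) (n - 1)
  else if e = n + 1 then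
    xsj ι n (s + (PABC ι n (n - 1) : ℤ) + 1) (n - 1)
      - (2 : ℚ) • xsj ι n (s + (PABC ι n n : ℤ) + 1) n
  else
    xsj ι n (s + (PABC ι n (2 * n - e) : ℤ) + (n : ℤ) - ((2 * n + 1 - e : ℕ) : ℤ) + 1)
        (2 * n - e)
      - xsj ι n (s + (PABC ι n (2 * n + 1 - e) : ℤ) + (n : ℤ) - ((2 * n + 1 - e : ℕ) : ℤ) + 1)
          (2 * n + 1 - e)

/-- The box of type D (`ovl(n+1)` encoded as `0`, `n̄` as `n+1`, `ovl(n-1)` as `n+2`). -/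
def boxD (ι : ℕ → ℕ) (n : ℕ) (s : ℤ) (e : ℕ) : ℕ → ℚ :=
  if e = 0 then xsj ι n (s + (PD ι n n : ℤ)) n
  else if e ≤ n - 2 then
    xsj ι n (s + (PD ι n e : ℤ)) e - xsj ι n (s + (PD ι n (e - 1) : ℤ) + 1) (e - 1)
  else if e = n - 1 then
    xsj ι n (s + (PD ι n (n - 1) : ℤ)) (n - 1) + xsj ι n (s + (PD ι n n : ℤ)) n
      - xsj ι n (s + (PD ι n (n - 2) : ℤ) + 1) (n - 2)
  else if e = n then
    xsj ι n (s + (PD ι n n : ℤ)) n - xsj ι n (s + (PD ι n (n - 1) : ℤ) + 1) (n - 1)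
  else if e = n + 1 then
    xsj ι n (s + (PD ι n (n - 1) : ℤ)) (n - 1) - xsj ι n (s + (PD ι n n : ℤ) + 1) n
  else if e = n + 2 then
    xsj ι n (s + (PD ι n (n - 2) : ℤ) + 1) (n - 2)
      - xsj ι n (s + (PD ι n (n - 1) : ℤ) + 1) (n - 1)
      - xsj ι n (s + (PD ι n n : ℤ) + 1) n
  else
    xsj ι n (s + (PD ι n (2 * n - e) : ℤ) + (n : ℤ) - ((2 * n + 1 - e : ℕ) : ℤ)) (2 * n - e)
      - xsj ι n (s + (PD ι n (2 * n + 1 - e) : ℤ) + (n : ℤ) - ((2 * n + 1 - e : ℕ) : ℤ))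
          (2 * n + 1 - e)

/-- The column tableau `[j_1,…,j_k]_s = Σ_{i=1}^k box_{s+k-i}(j_i)`. -/
def tab (box : ℤ → ℕ → ℕ → ℚ) (s : ℤ) (k : ℕ) (j : ℕ → ℕ) : ℕ → ℚ :=
  ∑ i ∈ Finset.Icc 1 k, box (s + (k : ℤ) - (i : ℤ)) (j i)

/-- The set `Tab_{A,ι}`. -/
def TabA (ι : ℕ → ℕ) (n : ℕ) : Set (ℕ → ℚ) :=
  { T | ∃ (k : ℕ) (s : ℤ) (j : ℕ → ℕ),
      1 ≤ k ∧ k ≤ n ∧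
      (∀ i, 1 ≤ i → i ≤ k → 1 ≤ j i ∧ j i ≤ n + 1) ∧
      (∀ i, 1 ≤ i → i < k → j i < j (i + 1)) ∧
      1 - (PABC ι n k : ℤ) ≤ s ∧
      T = tab (boxA ι n) s k j }

/-- `|·|` on encoded entries of `J_B = J_C`. -/
def absJ (n e : ℕ) : ℕ := if e ≤ n then e else 2 * n + 1 - e

/-- The set `Tab_{B,ι}`. -/
def TabB (ι : ℕ → ℕ) (n : ℕ) : Set (ℕ → ℚ) :=
  { T | ∃ (k : ℕ) (s : ℤ) (j : ℕ → ℕ),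
      1 ≤ k ∧ k ≤ n ∧
      (∀ i, 1 ≤ i → i ≤ k → 1 ≤ j i ∧ j i ≤ 2 * n) ∧
      (∀ i, 1 ≤ i → i < k → j i < j (i + 1)) ∧
      (k = n → ∀ l m, 1 ≤ l → l < m → m ≤ k → absJ n (j l) ≠ absJ n (j m)) ∧
      1 - (PABC ι n k : ℤ) ≤ s ∧
      T = tab (boxB ι n) s k j }

/-- Defining conditions of `Tab_{C,ι}` on the data `(k,s,j)`. -/
def TabCcond (ι : ℕ → ℕ) (n : ℕ) (k : ℕ) (s : ℤ) (j : ℕ → ℕ) : Prop :=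
  (1 ≤ k ∧ k ≤ n - 1 ∧
    (∀ i, 1 ≤ i → i ≤ k → 1 ≤ j i ∧ j i ≤ 2 * n) ∧
    (∀ i, 1 ≤ i → i < k → j i < j (i + 1)) ∧
    1 - (PABC ι n k : ℤ) ≤ s)
  ∨
  (j 1 = 0 ∧ 1 ≤ k ∧ k ≤ n + 1 ∧
    (∀ i, 2 ≤ i → i ≤ k → n + 1 ≤ j i ∧ j i ≤ 2 * n) ∧
    (∀ i, 2 ≤ i → i < k → j i < j (i + 1)) ∧
    1 - (PABC ι n n : ℤ) ≤ s)

/-- The set `Tab_{C,ι}`. -/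
def TabC (ι : ℕ → ℕ) (n : ℕ) : Set (ℕ → ℚ) :=
  { T | ∃ k s j, TabCcond ι n k s j ∧ T = tab (boxC ι n) s k j }

/-- The partial order on (encoded) `J_D`: `a ≤ b` iff `a = b`, or `a < b` numerically and
`(a,b)` is not the incomparable pair `(n, n̄)`. -/
def leD (n a b : ℕ) : Prop := a = b ∨ (a < b ∧ ¬(a = n ∧ b = n + 1))

/-- Defining conditions of `Tab_{D,ι}` on the data `(k,s,j)`. -/
def TabDcond (ι : ℕ → ℕ) (n : ℕ) (k : ℕ) (s : ℤ) (j : ℕ → ℕ) : Prop :=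
  (1 ≤ k ∧ k ≤ n - 2 ∧
    (∀ i, 1 ≤ i → i ≤ k → 1 ≤ j i ∧ j i ≤ 2 * n) ∧
    (∀ i, 1 ≤ i → i < k → ¬ leD n (j (i + 1)) (j i)) ∧
    1 - (PD ι n k : ℤ) ≤ s)
  ∨
  (j 1 = 0 ∧ 1 ≤ k ∧ k ≤ n + 1 ∧
    (∀ i, 2 ≤ i → i ≤ k → n + 1 ≤ j i ∧ j i ≤ 2 * n) ∧
    (∀ i, 2 ≤ i → i < k → j i < j (i + 1)) ∧
    (k % 2 = 0 → 1 - (PD ι n (n - 1) : ℤ) ≤ s) ∧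
    (k % 2 = 1 → 1 - (PD ι n n : ℤ) ≤ s))

/-- The set `Tab_{D,ι}`. -/
def TabD (ι : ℕ → ℕ) (n : ℕ) : Set (ℕ → ℚ) :=
  { T | ∃ k s j, TabDcond ι n k s j ∧ T = tab (boxD ι n) s k j }

end

/-!
Place on the nodes `v = 0, …, 2n` of a path the rescaled coordinate whose letter is `min v (2n - v)`
(`nodeForm`). The box with entry `e` is then the difference of two node forms along the edge from
`e - 1` to `e`, so a column with set of entries `F` telescopes to a sum over nodes in which `v` has
coefficient `1`, `-1` or `0` according to whether `F` contains `v` but not `v + 1`, `v + 1` but not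
`v`, or both or neither. The forms `β` are, up to scale, the second differences of the node forms;
hence replacing an entry `v` by `v + 1`, or conversely, subtracts from the column exactly the
multiple of `β` prescribed by `S`.

Two nodes lie over each letter `c < n`. If both contribute the coordinate on which `S` acts, either
they cancel or both entries move. A column of height `n` contains exactly one of each pair
`i`, `ī`, and this symmetry makes its two contributions agree, so both entries move and the symmetry
survives. In type C, a column that begins with `ovl(n+1)` is half of such a symmetric column, and
`S` commutes with positive scalars.
-/

open Filter Finset

section Occurrences

variable {ι : ℕ → ℕ} {i j s t : ℕ}

theorem occPos_lt_and_apply_occPos_succ (hj : ∃ᶠ k in atTop, ι k = j) (s : ℕ) :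
    occPos ι j s < occPos ι j (s + 1) ∧ ι (occPos ι j (s + 1)) = j :=
  Nat.sInf_mem (s := {k | occPos ι j s < k ∧ ι k = j}) (frequently_atTop.1 hj (occPos ι j s + 1))

theorem strictMono_occPos (hj : ∃ᶠ k in atTop, ι k = j) : StrictMono (occPos ι j) :=
  strictMono_nat_of_lt_succ fun s => (occPos_lt_and_apply_occPos_succ hj s).1

theorem apply_occPos_succ (hj : ∃ᶠ k in atTop, ι k = j) (s : ℕ) : ι (occPos ι j (s + 1)) = j :=
  (occPos_lt_and_apply_occPos_succ hj s).2

theorem occPos_succ_pos (hj : ∃ᶠ k in atTop, ι k = j) (s : ℕ) : 0 < occPos ι j (s + 1) :=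
  strictMono_occPos hj s.succ_pos

theorem apply_ne_of_lt_occPos_succ {m : ℕ} (h₁ : occPos ι j s < m) (h₂ : m < occPos ι j (s + 1)) :
    ι m ≠ j :=
  fun h => Nat.notMem_of_lt_sInf h₂ ⟨h₁, h⟩

theorem occPos_succ_eq_iff (hi : ∃ᶠ k in atTop, ι k = i) (hj : ∃ᶠ k in atTop, ι k = j) :
    occPos ι i (s + 1) = occPos ι j (t + 1) ↔ i = j ∧ s = t := by
  refine ⟨fun h => ?_, by rintro ⟨rfl, rfl⟩; rfl⟩
  obtain rfl : i = j := by rw [← apply_occPos_succ hi s, h, apply_occPos_succ hj]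
  exact ⟨rfl, by simpa using (strictMono_occPos hi).injective h⟩

theorem kplus_occPos_succ (hj : ∃ᶠ k in atTop, ι k = j) (s : ℕ) :
    kplus ι (occPos ι j (s + 1)) = occPos ι j (s + 2) := by
  rw [kplus, apply_occPos_succ hj]
  rfl

theorem kminus_occPos_succ (hj : ∃ᶠ k in atTop, ι k = j) (s : ℕ) :
    kminus ι (occPos ι j (s + 1)) = occPos ι j s := by
  have hlast : ∀ l < occPos ι j (s + 1), ι l = j → l ≤ occPos ι j s := fun l hl hlj =>
    not_lt.1 fun h => apply_ne_of_lt_occPos_succ h hl hlj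
  rw [kminus, apply_occPos_succ hj]
  cases s with
  | zero =>
    have hempty : {l | 0 < l ∧ l < occPos ι j 1 ∧ ι l = j} = ∅ :=
      Set.eq_empty_of_forall_notMem fun l hl => (hlast l hl.2.1 hl.2.2).not_gt hl.1
    rw [hempty, csSup_empty, occPos, Nat.bot_eq_zero]
  | succ s =>
    exact IsGreatest.csSup_eq ⟨⟨occPos_succ_pos hj s, strictMono_occPos hj (Nat.lt_succ_self _),
      apply_occPos_succ hj s⟩, fun l hl => hlast l hl.2.1 hl.2.2⟩

/-- The subsequence of `ι` formed by the letters `i` and `j` has no two equal consecutive terms;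
this is the property that `Adapted` demands of each pair of neighbouring letters. -/
def Alternates (ι : ℕ → ℕ) (i j : ℕ) : Prop :=
  ∀ k l, 1 ≤ k → k < l → (ι k = i ∨ ι k = j) → (ι l = i ∨ ι l = j) →
    (∀ m, k < m → m < l → ι m ≠ i ∧ ι m ≠ j) → ι k ≠ ι l

theorem Alternates.symm (h : Alternates ι i j) : Alternates ι j i :=
  fun k l hk hkl hik hil hm => h k l hk hkl hik.symm hil.symm fun m h₁ h₂ => (hm m h₁ h₂).symm

theorem Alternates.occPos_lt_occPos (h : Alternates ι i j) (hi : ∃ᶠ k in atTop, ι k = i)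
    (hlt : occPos ι j s < occPos ι i (t + 1)) : occPos ι j (s + 1) < occPos ι i (t + 2) := by
  by_contra! hle
  refine h _ _ (occPos_succ_pos hi t) (strictMono_occPos hi (show t + 1 < t + 2 by omega))
    (.inl (apply_occPos_succ hi t)) (.inl (apply_occPos_succ hi (t + 1)))
    (fun m hm₁ hm₂ => ⟨apply_ne_of_lt_occPos_succ hm₁ hm₂,
      apply_ne_of_lt_occPos_succ (hlt.trans hm₁) (hm₂.trans_le hle)⟩) ?_
  rw [apply_occPos_succ hi, apply_occPos_succ hi]

theorem Alternates.interlace (h : Alternates ι i j) (hi : ∃ᶠ k in atTop, ι k = i)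
    (hj : ∃ᶠ k in atTop, ι k = j) (hfirst : firstOcc ι i < firstOcc ι j) (t : ℕ) :
    occPos ι j t < occPos ι i (t + 1) ∧ occPos ι i (t + 1) < occPos ι j (t + 1) := by
  induction t with
  | zero => exact ⟨occPos_succ_pos hi 0, hfirst⟩
  | succ t ih =>
    exact ⟨h.occPos_lt_occPos hi ih.1, h.symm.occPos_lt_occPos hj ih.2⟩

theorem firstOcc_ne (hi : ∃ᶠ k in atTop, ι k = i) (hj : ∃ᶠ k in atTop, ι k = j) (hij : i ≠ j) :
    firstOcc ι i ≠ firstOcc ι j :=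
  fun h => hij ((occPos_succ_eq_iff (s := 0) (t := 0) hi hj).1 h).1

theorem pval_add_pval (hi : ∃ᶠ k in atTop, ι k = i) (hj : ∃ᶠ k in atTop, ι k = j) (hij : i ≠ j) :
    pval ι i j + pval ι j i = 1 := by
  have := firstOcc_ne hi hj hij
  unfold pval
  split_ifs <;> omega

theorem filter_Ioo_eq_singleton_occPos (hi : ∃ᶠ k in atTop, ι k = i) {u a b : ℕ}
    (ha : occPos ι i u < a) (ha' : a < occPos ι i (u + 1))
    (hb : occPos ι i (u + 1) < b) (hb' : b < occPos ι i (u + 2)) :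
    {l ∈ Ioo a b | ι l = i} = {occPos ι i (u + 1)} := by
  ext l
  simp only [mem_filter, mem_Ioo, mem_singleton]
  refine ⟨fun ⟨⟨hal, hlb⟩, hl⟩ => ?_, fun hl => hl ▸ ⟨⟨ha', hb⟩, apply_occPos_succ hi u⟩⟩
  rcases lt_trichotomy l (occPos ι i (u + 1)) with hlt | heq | hgt
  · exact absurd hl (apply_ne_of_lt_occPos_succ (ha.trans hal) hlt)
  · exact heq
  · exact absurd hl (apply_ne_of_lt_occPos_succ hgt (hlb.trans hb'))

theorem Alternates.filter_Ioo_occPos (h : Alternates ι i j) (hij : i ≠ j)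
    (hi : ∃ᶠ k in atTop, ι k = i) (hj : ∃ᶠ k in atTop, ι k = j) (t : ℕ) :
    {l ∈ Ioo (occPos ι j (t + 1)) (occPos ι j (t + 2)) | ι l = i}
      = {occPos ι i (t + 1 + pval ι i j)} := by
  unfold pval
  split_ifs with hfirst
  · have key := h.interlace hi hj hfirst
    exact filter_Ioo_eq_singleton_occPos hi (key t).2 (key (t + 1)).1 (key (t + 1)).2
      (key (t + 2)).1
  · have key := h.symm.interlace hj hi
      (lt_of_le_of_ne (not_lt.1 hfirst) (firstOcc_ne hj hi hij.symm))
    exact filter_Ioo_eq_singleton_occPos hi (key t).1 (key t).2 (key (t + 1)).1 (key (t + 1)).2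

theorem Admissible.frequently_eq {n : ℕ} (h : Admissible n ι) (hj : 1 ≤ j) (hjn : j ≤ n) :
    ∃ᶠ k in atTop, ι k = j :=
  frequently_atTop.2 (h.2.2 j hj hjn)

end Occurrences

section ShiftedCoordinates

variable {ι : ℕ → ℕ} {n : ℕ}

theorem xsj_of_notMem {j : ℕ} (hj : j ∉ Icc 1 n) (s : ℤ) : xsj ι n s j = 0 :=
  if_neg fun h => hj (mem_Icc.2 h.2)

theorem xsj_natCast {j s : ℕ} (hs : 1 ≤ s) (hj : j ∈ Icc 1 n) :
    xsj ι n s j = xc (occPos ι j s) := by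
  rw [mem_Icc] at hj
  rw [xsj, if_pos ⟨by omega, hj⟩, Int.toNat_natCast]

theorem xsj_apply_occPos (hadm : Admissible n ι) {i j m : ℕ} (hj : j ∈ Icc 1 n) (hm : 1 ≤ m)
    (s : ℤ) : xsj ι n s i (occPos ι j m) = if i = j ∧ s = m then 1 else 0 := by
  rw [mem_Icc] at hj
  by_cases hi : 1 ≤ s ∧ 1 ≤ i ∧ i ≤ n
  · obtain ⟨m, rfl⟩ := Nat.exists_eq_add_of_le' hm
    obtain ⟨s, rfl⟩ := Int.eq_ofNat_of_zero_le (zero_le_one.trans hi.1)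
    obtain ⟨s, rfl⟩ := Nat.exists_eq_add_of_le' (show 1 ≤ s by omega)
    rw [xsj_natCast (by omega) (mem_Icc.2 hi.2), xc]
    simp only [occPos_succ_eq_iff (hadm.frequently_eq hj.1 hj.2)
      (hadm.frequently_eq hi.2.1 hi.2.2), Nat.cast_inj, Nat.add_right_cancel_iff, eq_comm]
  · rw [xsj, if_neg hi, if_neg (by rintro ⟨rfl, rfl⟩; omega), Pi.zero_apply]

theorem sum_xc_Ioo_occPos (hadm : Admissible n ι) {i j t : ℕ} (hj : j ∈ Icc 1 n) (hij : i ≠ j)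
    (halt : i ∈ Icc 1 n → Alternates ι i j) (ht : 1 ≤ t) :
    ∑ l ∈ Ioo (occPos ι j t) (occPos ι j (t + 1)) with ι l = i, xc l
      = xsj ι n (t + pval ι i j) i := by
  by_cases hi : i ∈ Icc 1 n
  · rw [← Nat.cast_add, xsj_natCast (by omega) hi]
    obtain ⟨t, rfl⟩ := Nat.exists_eq_add_of_le' ht
    have h := halt hi
    rw [mem_Icc] at hi hj
    rw [h.filter_Ioo_occPos hij (hadm.frequently_eq hi.1 hi.2) (hadm.frequently_eq hj.1 hj.2),
      sum_singleton]
  · rw [xsj_of_notMem hi, sum_eq_zero]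
    intro l hl
    obtain ⟨hl, rfl⟩ := mem_filter.1 hl
    exact absurd (mem_Icc.2 (hadm.1 l (by grind))) hi

/-- The coordinate `x_{t+P(j),j}`. The shift by `P(j)` puts the first occurrences of all letters on
a common scale: it makes the expression of `β` in these coordinates independent of `ι`. -/
noncomputable def shiftedCoord (ι : ℕ → ℕ) (n : ℕ) (t : ℤ) (j : ℕ) : ℕ → ℚ :=
  xsj ι n (t + PABC ι n j) j

theorem shiftedCoord_zero (t : ℤ) : shiftedCoord ι n t 0 = 0 := xsj_of_notMem (by simp) _

theorem shiftedCoord_apply_occPos (hadm : Admissible n ι) {i j m : ℕ} (hj : j ∈ Icc 1 n)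
    (hm : 1 ≤ m) {t : ℤ} (ht : t + PABC ι n j = m) (s : ℤ) :
    shiftedCoord ι n s i (occPos ι j m) = if i = j ∧ s = t then 1 else 0 := by
  rw [shiftedCoord, xsj_apply_occPos hadm hj hm]
  refine if_congr (and_congr_right ?_) rfl rfl
  rintro rfl
  omega

theorem PABC_succ {j : ℕ} (hj : 1 ≤ j) (hjn : j + 1 ≤ n) :
    PABC ι n (j + 1) = PABC ι n j + pval ι (j + 1) j := by
  rw [PABC, PABC, if_pos hjn, if_pos (by omega), sum_Icc_succ_top (by omega), Nat.add_sub_cancel]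

theorem xsj_add_pval_succ {j : ℕ} (hj : 1 ≤ j) (t : ℤ) :
    xsj ι n (t + PABC ι n j + pval ι (j + 1) j) (j + 1) = shiftedCoord ι n t (j + 1) := by
  by_cases hjn : j + 1 ≤ n
  · rw [shiftedCoord, PABC_succ hj hjn, Nat.cast_add, add_assoc]
  · have hnot : j + 1 ∉ Icc 1 n := by simp [hjn]
    rw [shiftedCoord, xsj_of_notMem hnot, xsj_of_notMem hnot]

theorem xsj_add_pval_pred (hadm : Admissible n ι) {j : ℕ} (hjn : j + 1 ≤ n) (t : ℤ) :
    xsj ι n (t + PABC ι n (j + 1) + pval ι j (j + 1)) j = shiftedCoord ι n (t + 1) j := by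
  rcases Nat.eq_zero_or_pos j with rfl | hj
  · rw [shiftedCoord_zero, xsj_of_notMem (by simp)]
  · have hp := pval_add_pval (hadm.frequently_eq hj (by omega))
      (hadm.frequently_eq (by omega) hjn) j.lt_succ_self.ne
    have hP := PABC_succ (ι := ι) hj hjn
    rw [shiftedCoord]
    congr 1
    omega

/-- The form `β_{t+P(c),c}` written in shifted coordinates; unlike `betasj` it follows the same
formula for every integer `t`, also where the position `t + P(c)` is not positive. -/
noncomputable def rootForm (A : ℕ → ℕ → ℤ) (ι : ℕ → ℕ) (n : ℕ) (t : ℤ) (c : ℕ) : ℕ → ℚ :=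
  shiftedCoord ι n t c + shiftedCoord ι n (t + 1) c
    + (A c (c + 1) : ℚ) • shiftedCoord ι n t (c + 1)
    + (A c (c - 1) : ℚ) • shiftedCoord ι n (t + 1) (c - 1)

theorem beta_occPos (hadm : Admissible n ι) {A : ℕ → ℕ → ℤ} {c m : ℕ} (hc : c ∈ Icc 1 n)
    (hA : ∀ i, i ≠ c → i ≠ c + 1 → i ≠ c - 1 → A c i = 0)
    (hsucc : c + 1 ≤ n → Alternates ι (c + 1) c) (hpred : 1 ≤ c - 1 → Alternates ι (c - 1) c)
    (hm : 1 ≤ m) {t : ℤ} (ht : t + PABC ι n c = m) :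
    beta A ι (occPos ι c m) = rootForm A ι n t c := by
  have hc' := mem_Icc.1 hc
  obtain ⟨u, rfl⟩ := Nat.exists_eq_add_of_le' hm
  have hfreq := hadm.frequently_eq hc'.1 hc'.2
  have hsum : ∑ l ∈ Ioo (occPos ι c (u + 1)) (occPos ι c (u + 2)), (A c (ι l) : ℚ) • xc l
      = (A c (c + 1) : ℚ) • shiftedCoord ι n t (c + 1)
        + (A c (c - 1) : ℚ) • shiftedCoord ι n (t + 1) (c - 1) := by
    have hpred_eq := xsj_add_pval_pred hadm (j := c - 1) (by omega) t
    rw [Nat.sub_add_cancel hc'.1] at hpred_eq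
    rw [← xsj_add_pval_succ hc'.1, ← hpred_eq, ht,
      ← sum_xc_Ioo_occPos hadm hc (by omega) (fun h => hsucc (mem_Icc.1 h).2) hm,
      ← sum_xc_Ioo_occPos hadm hc (by omega) (fun h => hpred (mem_Icc.1 h).1) hm,
      smul_sum, smul_sum, sum_filter, sum_filter, ← sum_add_distrib]
    refine sum_congr rfl fun l hl => ?_
    have hne : ι l ≠ c := apply_ne_of_lt_occPos_succ (mem_Ioo.1 hl).1 (mem_Ioo.1 hl).2
    by_cases h₁ : ι l = c + 1
    · rw [if_pos h₁, if_neg (by omega), h₁, add_zero]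
    · by_cases h₂ : ι l = c - 1
      · rw [if_neg h₁, if_pos h₂, h₂, zero_add]
      · rw [if_neg h₁, if_neg h₂, hA _ hne h₁ h₂, Int.cast_zero, zero_smul, add_zero]
  have hfst : shiftedCoord ι n t c = xc (occPos ι c (u + 1)) := by
    rw [shiftedCoord, ht, xsj_natCast hm hc]
  have hsnd : shiftedCoord ι n (t + 1) c = xc (occPos ι c (u + 2)) := by
    rw [shiftedCoord, add_right_comm, ht, ← Nat.cast_succ, xsj_natCast (by omega) hc]
  rw [beta, if_neg (occPos_succ_pos hfreq u).ne', kplus_occPos_succ hfreq,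
    apply_occPos_succ hfreq, hsum, rootForm, hfst, hsnd]
  abel

end ShiftedCoordinates

section Columns

variable {M : Type*} [AddCommGroup M] {F : Finset ℕ} {v e : ℕ}

/-- The number of entries of the column `F` that exceed `v`. For an entry `v` of a column of
height `k` in row `i` this is `k - i`, the shift of the index of the corresponding box. -/
def above (F : Finset ℕ) (v : ℕ) : ℕ := #{x ∈ F | v < x}

/-- The column tableau whose set of entries is `F`. -/
def columnSum (box : ℤ → ℕ → M) (s : ℤ) (F : Finset ℕ) : M := ∑ e ∈ F, box (s + above F e) e

theorem above_image {f : ℕ → ℕ} {k i : ℕ} (hf : StrictMonoOn f (Icc 1 k : Finset ℕ))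
    (hi : i ∈ Icc 1 k) : above ((Icc 1 k).image f) (f i) = k - i := by
  have hfilter : {x ∈ Icc 1 k | f i < f x} = Ioc i k := by
    ext x
    simp only [mem_filter, mem_Ioc]
    refine ⟨fun ⟨hx, hlt⟩ => ⟨(hf.lt_iff_lt hi hx).1 hlt, (mem_Icc.1 hx).2⟩, fun ⟨hix, hxk⟩ => ?_⟩
    have hx : x ∈ Icc 1 k := mem_Icc.2 ⟨(mem_Icc.1 hi).1.trans hix.le, hxk⟩
    exact ⟨hx, hf hi hx hix⟩
  rw [above, filter_image, hfilter, card_image_of_injOn, Nat.card_Ioc]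
  exact hf.injOn.mono (by simp only [← hfilter, coe_filter]; exact fun x hx => hx.1)

theorem tab_eq_columnSum (box : ℤ → ℕ → ℕ → ℚ) (s : ℤ) {k : ℕ} {f : ℕ → ℕ}
    (hf : StrictMonoOn f (Icc 1 k : Finset ℕ)) :
    tab box s k f = columnSum box s ((Icc 1 k).image f) := by
  rw [columnSum, sum_image hf.injOn]
  refine sum_congr rfl fun i hi => ?_
  rw [above_image hf hi, Nat.cast_sub (mem_Icc.1 hi).2, add_sub_assoc]

theorem exists_strictMonoOn_image_eq (F : Finset ℕ) :
    ∃ f : ℕ → ℕ, StrictMonoOn f (Icc 1 #F : Finset ℕ) ∧ (Icc 1 #F).image f = F := by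
  have hfin : (Set.ofPred (· ∈ F)).Finite := F.finite_toSet
  have hcard : #hfin.toFinset = #F := by congr 1; ext x; simp
  refine ⟨fun i => Nat.nth (· ∈ F) (i - 1), fun i hi j hj hij => ?_, ext fun x => ?_⟩
  · rw [mem_coe, mem_Icc] at hi hj
    exact Nat.nth_lt_nth_of_lt_card hfin (by omega) (by omega)
  · refine ⟨fun hx => ?_, fun hx => ?_⟩
    · obtain ⟨i, hi, rfl⟩ := mem_image.1 hx
      rw [mem_Icc] at hi
      exact Nat.nth_mem_of_lt_card hfin (by omega)
    · obtain ⟨i, hi, rfl⟩ := Nat.exists_lt_card_finite_nth_eq hfin hx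
      exact mem_image.2 ⟨i + 1, mem_Icc.2 (by omega), by simp⟩

theorem exists_tab_iff {box : ℤ → ℕ → ℕ → ℚ} {p : ℤ → Finset ℕ → Prop} {T : ℕ → ℚ} :
    (∃ (k : ℕ) (s : ℤ) (f : ℕ → ℕ), StrictMonoOn f (Icc 1 k : Finset ℕ) ∧
      p s ((Icc 1 k).image f) ∧ T = tab box s k f) ↔
      ∃ s F, p s F ∧ T = columnSum box s F := by
  constructor
  · rintro ⟨k, s, f, hf, hp, rfl⟩
    exact ⟨s, _, hp, tab_eq_columnSum box s hf⟩
  · rintro ⟨s, F, hp, rfl⟩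
    obtain ⟨f, hf, hF⟩ := exists_strictMonoOn_image_eq F
    exact ⟨#F, s, f, hf, hF.symm ▸ hp, by rw [tab_eq_columnSum box s hf, hF]⟩

theorem above_eq_above_succ_add (F : Finset ℕ) (v : ℕ) :
    above F v = above F (v + 1) + if v + 1 ∈ F then 1 else 0 := by
  have hsplit : {x ∈ F | v < x} = {x ∈ F | v + 1 < x} ∪ {x ∈ F | x = v + 1} := by
    rw [← filter_or]
    exact filter_congr fun x _ => by omega
  rw [above, hsplit, card_union_of_disjoint (disjoint_filter.2 (by omega)), above, filter_eq']
  split_ifs <;> rfl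

/-- Exchanges `v` and `v + 1` in the column `F`. -/
def slide (v : ℕ) (F : Finset ℕ) : Finset ℕ := F.map (Equiv.swap v (v + 1)).toEmbedding

theorem mem_slide : e ∈ slide v F ↔ Equiv.swap v (v + 1) e ∈ F := by
  rw [slide, mem_map_equiv, Equiv.symm_swap]

theorem card_slide (v : ℕ) (F : Finset ℕ) : #(slide v F) = #F := card_map _

theorem slide_slide (v : ℕ) (F : Finset ℕ) : slide v (slide v F) = F := by
  ext e
  rw [mem_slide, mem_slide, Equiv.swap_apply_self]

theorem above_slide (he : e ≠ v) : above (slide v F) e = above F e := by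
  rw [above, slide, filter_map, card_map, above]
  congr 1
  refine filter_congr fun x _ => ?_
  simp only [Function.comp_apply, Equiv.coe_toEmbedding, Equiv.swap_apply_def]
  split_ifs <;> omega

theorem columnSum_slide_of_mem (box : ℤ → ℕ → M) (s : ℤ) (hv : v ∈ F) (hv' : v + 1 ∉ F) :
    columnSum box s (slide v F)
      = columnSum box s F + (box (s + above F v) (v + 1) - box (s + above F v) v) := by
  have hslide : slide v F = insert (v + 1) (F.erase v) := by
    ext e
    simp only [mem_slide, mem_insert, mem_erase, Equiv.swap_apply_def]
    grind
  have habove : above F (v + 1) = above F v := by simp [above_eq_above_succ_add F v, hv']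
  have hsum : columnSum box s (slide v F)
      = ∑ e ∈ insert (v + 1) (F.erase v), box (s + above F e) e := by
    rw [columnSum, hslide]
    refine sum_congr rfl fun e he => ?_
    rw [← hslide, above_slide]
    grind
  rw [hsum, sum_insert (by simp [hv']), habove, columnSum, ← add_sum_erase F _ hv]
  abel

theorem columnSum_slide_of_notMem (box : ℤ → ℕ → M) (s : ℤ) (hv : v ∉ F) (hv' : v + 1 ∈ F) :
    columnSum box s (slide v F)
      = columnSum box s F - (box (s + above F v - 1) (v + 1) - box (s + above F v - 1) v) := by
  have hmem : v ∈ slide v F := by rwa [mem_slide, Equiv.swap_apply_left]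
  have hnot : v + 1 ∉ slide v F := by rwa [mem_slide, Equiv.swap_apply_right]
  have habove : above (slide v F) v + 1 = above F v := by
    rw [above_eq_above_succ_add (slide v F), if_neg hnot, above_slide v.succ_ne_self,
      above_eq_above_succ_add F v, if_pos hv', add_zero]
  have h := columnSum_slide_of_mem box s hmem hnot
  rw [slide_slide] at h
  rw [h, ← habove, Nat.cast_add, Nat.cast_one, ← add_assoc, add_sub_cancel_right]
  abel

/-- The increment at `v` of the indicator function of the column `F`, read downwards. -/
def jump (F : Finset ℕ) (v : ℕ) : ℤ := (if v ∈ F then 1 else 0) - if v + 1 ∈ F then 1 else 0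

/-- The boxes attached to forms `u r v` on the nodes `v` of a path: the box `e` is the difference
of the forms at the two endpoints of the edge from `e - 1` to `e`. -/
def nodeBox (u : ℤ → ℕ → M) (r : ℤ) (e : ℕ) : M := u r e - u (r + 1) (e - 1)

theorem columnSum_nodeBox (u : ℤ → ℕ → M) (s : ℤ) {N : ℕ} (hF : F ⊆ Icc 1 N) :
    columnSum (nodeBox u) s F = ∑ v ∈ range (N + 1), jump F v • u (s + above F v) v := by
  have hpos : ∑ v ∈ range (N + 1), (if v ∈ F then 1 else 0 : ℤ) • u (s + above F v) v
      = ∑ e ∈ F, u (s + above F e) e := by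
    simp only [ite_smul, one_smul, zero_smul]
    rw [← sum_filter]
    congr 1
    grind
  have hneg : ∑ v ∈ range (N + 1), (if v + 1 ∈ F then 1 else 0 : ℤ) • u (s + above F v) v
      = ∑ e ∈ F, u (s + above F e + 1) (e - 1) := by
    simp only [ite_smul, one_smul, zero_smul]
    rw [← sum_filter]
    refine sum_bij' (fun v _ => v + 1) (fun e _ => e - 1) (by grind) (by grind) (by grind)
      (by grind) fun v hv => ?_
    rw [above_eq_above_succ_add F v, if_pos (mem_filter.1 hv).2, Nat.add_sub_cancel,
      Nat.cast_add, Nat.cast_one, add_assoc]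
  simp only [columnSum, nodeBox, jump, sub_smul, sum_sub_distrib, hpos, hneg]

end Columns

section Transversals

variable {M : Type*} [AddCommGroup M] {n : ℕ} {F G : Finset ℕ}

/-- Of the two entries `e` and `2 * n + 1 - e`, which encode `i` and its bar, exactly one belongs
to `F`. -/
def Transversal (n : ℕ) (F : Finset ℕ) : Prop := ∀ e ∈ Icc 1 (2 * n), 2 * n + 1 - e ∈ F ↔ e ∉ F

theorem Transversal.above_add (h : Transversal n F) {i : ℕ} (hi : i ≤ n) :
    above F (n + i) + i = above F (n - i) := by
  induction i with
  | zero => rfl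
  | succ i ih =>
    have hbar : n - i ∈ F ↔ n + (i + 1) ∉ F := by
      simpa only [show 2 * n + 1 - (n + (i + 1)) = n - i by omega]
        using h (n + (i + 1)) (mem_Icc.2 (by omega))
    have hlow := above_eq_above_succ_add F (n - (i + 1))
    have hhigh := above_eq_above_succ_add F (n + i)
    rw [show n - (i + 1) + 1 = n - i by omega] at hlow
    have := ih (by omega)
    grind

theorem Transversal.jump_add (h : Transversal n F) {i : ℕ} (hi : i < n) :
    jump F (n + i) = jump F (n - i) := by
  have h₁ := h (n + i + 1) (mem_Icc.2 (by omega))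
  have h₂ := h (n - i + 1) (mem_Icc.2 (by omega))
  rw [show 2 * n + 1 - (n + i + 1) = n - i by omega] at h₁
  rw [show 2 * n + 1 - (n - i + 1) = n + i by omega] at h₂
  simp only [jump, h₁, h₂]
  split_ifs <;> rfl

theorem Transversal.card_eq (h : Transversal n F) (hF : F ⊆ Icc 1 (2 * n)) : #F = n := by
  have hall : {x ∈ F | n - n < x} = F := filter_true_of_mem fun x hx => by grind
  have hnone : {x ∈ F | n + n < x} = ∅ := filter_false_of_mem fun x hx => by grind
  have := h.above_add le_rfl
  rwa [above, above, hall, hnone, card_empty, zero_add, eq_comm] at this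

theorem Transversal.slide_middle (h : Transversal n F) : Transversal n (slide n F) := by
  intro e he
  have hn := h (Equiv.swap n (n + 1) e)
  rw [mem_slide, mem_slide]
  simp only [Equiv.swap_apply_def] at hn ⊢
  grind

theorem Transversal.slide_both (h : Transversal n F) {c : ℕ} (hc : 1 ≤ c) (hcn : c < n) :
    Transversal n (slide (2 * n - c) (slide c F)) := by
  intro e he
  rw [mem_slide, mem_slide, mem_slide, mem_slide]
  set σ := Equiv.swap c (c + 1) with hσ
  set τ := Equiv.swap (2 * n - c) (2 * n - c + 1) with hτ
  have hmem : σ (τ e) ∈ Icc 1 (2 * n) := by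
    rw [mem_Icc] at he ⊢
    simp only [hσ, hτ, Equiv.swap_apply_def]
    split_ifs <;> omega
  have hbar : σ (τ (2 * n + 1 - e)) = 2 * n + 1 - σ (τ e) := by
    rw [mem_Icc] at he
    simp only [hσ, hτ, Equiv.swap_apply_def]
    split_ifs <;> omega
  rw [hbar, h _ hmem]

theorem injOn_absJ_iff_transversal (hF : F ⊆ Icc 1 (2 * n)) (hcard : #F = n) :
    Set.InjOn (absJ n) F ↔ Transversal n F := by
  refine ⟨fun hinj e he => ?_, fun h x hx y hy hxy => ?_⟩
  · have himage : F.image (absJ n) = Icc 1 n := by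
      refine eq_of_subset_of_card_le (image_subset_iff.2 fun x hx => ?_) ?_
      · have := mem_Icc.1 (hF hx)
        rw [absJ, mem_Icc]
        split_ifs <;> omega
      · rw [card_image_of_injOn hinj, hcard, Nat.card_Icc, Nat.add_sub_cancel]
    rw [mem_Icc] at he
    have hmem : absJ n e ∈ F.image (absJ n) := by
      rw [himage, mem_Icc, absJ]
      split_ifs <;> omega
    obtain ⟨x, hx, hxe⟩ := mem_image.1 hmem
    have hbar : absJ n (2 * n + 1 - e) = absJ n e := by
      unfold absJ
      split_ifs <;> omega
    have hor : x = e ∨ x = 2 * n + 1 - e := by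
      have := mem_Icc.1 (hF hx)
      unfold absJ at hxe
      split_ifs at hxe <;> omega
    refine ⟨fun hbarF heF => ?_, fun heF => ?_⟩
    · have := hinj hbarF heF hbar
      omega
    · rcases hor with rfl | rfl
      · exact absurd hx heF
      · exact hx
  · have hbar := h x (hF hx)
    have hx' := mem_Icc.1 (hF hx)
    have hy' := mem_Icc.1 (hF hy)
    by_contra hne
    have hyx : y = 2 * n + 1 - x := by
      unfold absJ at hxy
      split_ifs at hxy <;> omega
    exact hbar.1 (hyx ▸ hy) hx

/-- The transversal column whose barred entries are those of `G`. -/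
def completion (n : ℕ) (G : Finset ℕ) : Finset ℕ := G ∪ {e ∈ Icc 1 n | 2 * n + 1 - e ∉ G}

theorem completion_subset (hG : G ⊆ Icc (n + 1) (2 * n)) : completion n G ⊆ Icc 1 (2 * n) := by
  intro e he
  grind [completion]

theorem transversal_completion (hG : G ⊆ Icc (n + 1) (2 * n)) : Transversal n (completion n G) := by
  intro e he
  grind [completion]

theorem filter_lt_completion (hG : G ⊆ Icc (n + 1) (2 * n)) :
    {e ∈ completion n G | n < e} = G := by
  grind [completion]

theorem sum_range_eq_of_symm {g : ℕ → M}
    (hg : ∀ i ∈ Icc 1 n, g (n - i) = g (n + i)) :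
    ∑ v ∈ range (2 * n + 1), g v = g n + 2 • ∑ i ∈ range n, g (n + (i + 1)) := by
  have hlow : ∑ v ∈ range n, g v = ∑ i ∈ range n, g (n + (i + 1)) := by
    rw [← sum_range_reflect]
    refine sum_congr rfl fun i hi => ?_
    rw [mem_range] at hi
    rw [← hg _ (mem_Icc.2 (by omega)), Nat.sub_sub, Nat.add_comm 1 i]
  rw [two_mul, add_assoc, sum_range_add, sum_range_succ', hlow, add_zero, two_nsmul]
  abel

theorem columnSum_nodeBox_filter_lt (u : ℤ → ℕ → M) (s : ℤ) (hF : F ⊆ Icc 1 (2 * n)) :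
    columnSum (nodeBox u) s {e ∈ F | n < e}
      = jump {e ∈ F | n < e} n • u (s + above F n) n
        + ∑ i ∈ range n, jump F (n + (i + 1)) • u (s + above F (n + (i + 1))) (n + (i + 1)) := by
  have habove : ∀ i, above {e ∈ F | n < e} (n + i) = above F (n + i) := fun i => by
    rw [above, above, filter_filter]
    exact congrArg card (filter_congr fun x _ => by omega)
  have hmiddle : above {e ∈ F | n < e} n = above F n := habove 0
  have hjump : ∀ i, jump {e ∈ F | n < e} (n + (i + 1)) = jump F (n + (i + 1)) := fun i => by
    simp [jump, mem_filter, add_assoc]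
  have hlow : ∀ v ∈ range n,
      jump {e ∈ F | n < e} v • u (s + above {e ∈ F | n < e} v) v = 0 := fun v hv => by
    have hvn := mem_range.1 hv
    rw [jump, if_neg (by grind), if_neg (by grind), sub_zero, zero_smul]
  rw [columnSum_nodeBox u s ((filter_subset _ F).trans hF), two_mul, add_assoc, sum_range_add,
    sum_eq_zero hlow, zero_add, sum_range_succ', add_comm]
  simp only [habove, hjump, add_zero, hmiddle]

theorem Transversal.columnSum_nodeBox_eq_sum {u : ℤ → ℕ → M} (h : Transversal n F)
    (hF : F ⊆ Icc 1 (2 * n)) (hu₀ : ∀ r, u r 0 = 0)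
    (hu : ∀ r, ∀ i ≤ n, u r (n + i) = u (r + i) (n - i)) (s : ℤ) :
    columnSum (nodeBox u) s F = jump F n • u (s + above F n) n
      + 2 • ∑ i ∈ range n, jump F (n + (i + 1)) • u (s + above F (n + (i + 1))) (n + (i + 1)) := by
  rw [columnSum_nodeBox u s hF, sum_range_eq_of_symm]
  intro i hi
  obtain ⟨-, hin⟩ := mem_Icc.1 hi
  rw [hu _ i hin, ← h.above_add hin, Nat.cast_add, add_assoc]
  rcases hin.lt_or_eq with hlt | rfl
  · rw [h.jump_add hlt]
  · rw [Nat.sub_self, hu₀, smul_zero, smul_zero]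

theorem Transversal.jump_eq (h : Transversal n F) (hn : 1 ≤ n) :
    jump F n = 1 + 2 * jump {e ∈ F | n < e} n := by
  have hbar := h n (mem_Icc.2 (by omega))
  rw [show 2 * n + 1 - n = n + 1 by omega] at hbar
  simp only [jump, mem_filter, hbar]
  grind

/-- Nodes symmetric about the middle contribute equally to a transversal column, and omitting the
unbarred entries changes the coefficient at the middle node by one half. -/
theorem Transversal.columnSum_nodeBox_eq {u : ℤ → ℕ → M} (h : Transversal n F) (hn : 1 ≤ n)
    (hF : F ⊆ Icc 1 (2 * n)) (hu₀ : ∀ r, u r 0 = 0)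
    (hu : ∀ r, ∀ i ≤ n, u r (n + i) = u (r + i) (n - i)) (s : ℤ) :
    columnSum (nodeBox u) s F
      = u (s + above F n) n + 2 • columnSum (nodeBox u) s {e ∈ F | n < e} := by
  rw [h.columnSum_nodeBox_eq_sum hF hu₀ hu, columnSum_nodeBox_filter_lt u s hF, h.jump_eq hn]
  module

end Transversals

section FoldedCartan

variable {n : ℕ} {d : ℚ} {A : ℕ → ℕ → ℤ} {ι : ℕ → ℕ} {c m v : ℕ} {t r : ℤ}

/-- The factor by which the letter `c` is rescaled: `d` for the last letter `n`, and `1` for the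
others. -/
def weight (n : ℕ) (d : ℚ) (c : ℕ) : ℚ := if c = n then d else 1

theorem weight_of_lt (hc : c < n) : weight n d c = 1 := if_neg hc.ne

theorem weight_self : weight n d n = d := if_pos rfl

theorem weight_pos (hd : 0 < d) (c : ℕ) : 0 < weight n d c := by
  unfold weight
  split_ifs
  exacts [hd, one_pos]

/-- The Cartan matrices obtained from type `A_{2n-1}` by folding its diagram about the middle node
and rescaling that node by `d`; type `B_n` is the case `d = 1` and type `C_n` the case `d = 2`. -/
structure FoldedCartan (n : ℕ) (d : ℚ) (A : ℕ → ℕ → ℤ) : Prop where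
  succ_eq : ∀ c, 1 ≤ c → c < n → (A c (c + 1) : ℚ) = -weight n d (c + 1)
  pred_eq : ∀ c, 1 ≤ c → c < n → A c (c - 1) = -1
  last_eq : d * A n (n - 1) = -2
  eq_zero : ∀ c i, i ≠ c → i ≠ c + 1 → i ≠ c - 1 → A c i = 0

theorem foldedCartan_cartanB (hn : 2 ≤ n) : FoldedCartan n 1 (cartanB n) where
  succ_eq c _ hcn := by simp [cartanB, weight, hcn.ne]
  pred_eq c hc hcn := by grind [cartanB]
  last_eq := by
    have h : cartanB n n (n - 1) = -2 := by grind [cartanB]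
    norm_num [h]
  eq_zero c i _ _ _ := by grind [cartanB]

theorem foldedCartan_cartanC (hn : 2 ≤ n) : FoldedCartan n 2 (cartanC n) where
  succ_eq c _ _ := by
    have h : cartanC n c (c + 1) = if c + 1 = n then -2 else -1 := by grind [cartanC]
    rw [h, weight]
    split_ifs <;> norm_num
  pred_eq c hc _ := by grind [cartanC]
  last_eq := by
    have h : cartanC n n (n - 1) = -1 := by grind [cartanC]
    norm_num [h]
  eq_zero c i _ _ _ := by grind [cartanC]

theorem FoldedCartan.alternates_succ (hA : FoldedCartan n d A) (hd : d ≠ 0) (h : Adapted n A ι)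
    (hc : 1 ≤ c) (hcn : c + 1 ≤ n) : Alternates ι (c + 1) c := by
  have hne : A c (c + 1) ≠ 0 := fun h₀ => by
    have hw := hA.succ_eq c hc hcn
    rw [h₀, Int.cast_zero, weight] at hw
    split_ifs at hw <;> simp_all
  exact Alternates.symm (h c (c + 1) hc (by omega) (by omega) hcn (by omega) hne)

theorem FoldedCartan.alternates_pred (hA : FoldedCartan n d A) (h : Adapted n A ι)
    (hc : 1 ≤ c - 1) (hcn : c ≤ n) : Alternates ι (c - 1) c := by
  have hne : A c (c - 1) ≠ 0 := fun h₀ => by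
    rcases hcn.lt_or_eq with hlt | rfl
    · simp [hA.pred_eq c (by omega) hlt] at h₀
    · simpa [h₀] using hA.last_eq
  exact Alternates.symm (h c (c - 1) (by omega) hcn hc (by omega) (by omega) hne)

theorem FoldedCartan.beta_occPos (hA : FoldedCartan n d A) (hd : d ≠ 0) (hadm : Admissible n ι)
    (h : Adapted n A ι) (hc : c ∈ Icc 1 n) (hm : 1 ≤ m) (ht : t + PABC ι n c = m) :
    beta A ι (occPos ι c m) = rootForm A ι n t c := by
  have hc' := mem_Icc.1 hc
  exact _root_.beta_occPos hadm hc (hA.eq_zero c) (hA.alternates_succ hd h hc'.1)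
    (fun h₁ => hA.alternates_pred h h₁ hc'.2) hm ht

/-- The letter lying under the node `v` of the path `0, …, 2n` folded about its middle `n`. -/
def foldNode (n v : ℕ) : ℕ := min v (2 * n - v)

theorem foldNode_of_le (hv : v ≤ n) : foldNode n v = v := min_eq_left (by omega)

theorem foldNode_of_ge (hv : n ≤ v) : foldNode n v = 2 * n - v := min_eq_right (by omega)

/-- The form placed at the node `v` of the folded path. The boxes of types B and C are its
differences along the edges of the path. -/
noncomputable def nodeForm (ι : ℕ → ℕ) (n : ℕ) (d : ℚ) (r : ℤ) (v : ℕ) : ℕ → ℚ :=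
  weight n d (foldNode n v) • shiftedCoord ι n (r + (v - n : ℕ)) (foldNode n v)

theorem nodeForm_of_le (hv : v ≤ n) :
    nodeForm ι n d r v = weight n d v • shiftedCoord ι n r v := by
  rw [nodeForm, foldNode_of_le hv, Nat.sub_eq_zero_of_le hv, Nat.cast_zero, add_zero]

theorem nodeForm_add {i : ℕ} (hi : i ≤ n) :
    nodeForm ι n d r (n + i) = nodeForm ι n d (r + i) (n - i) := by
  rw [nodeForm_of_le (n.sub_le i), nodeForm, foldNode_of_ge (n.le_add_right i),
    Nat.add_sub_cancel_left, show 2 * n - (n + i) = n - i by omega]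

theorem nodeForm_zero (r : ℤ) : nodeForm ι n d r 0 = 0 := by
  rw [nodeForm_of_le n.zero_le, shiftedCoord_zero, smul_zero]

theorem nodeForm_apply_occPos (hadm : Admissible n ι) (hc : c ∈ Icc 1 n) (hm : 1 ≤ m)
    (ht : t + PABC ι n c = m) (r : ℤ) (v : ℕ) :
    nodeForm ι n d r v (occPos ι c m)
      = if foldNode n v = c ∧ r + (v - n : ℕ) = t then weight n d c else 0 := by
  rw [nodeForm, Pi.smul_apply, shiftedCoord_apply_occPos hadm hc hm ht]
  split_ifs with h
  · rw [h.1, smul_eq_mul, mul_one]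
  · rw [smul_zero]

theorem FoldedCartan.nodeBox_succ_sub_of_lt (hA : FoldedCartan n d A) (hc : 1 ≤ c) (hcn : c < n)
    (r : ℤ) : nodeBox (nodeForm ι n d) r (c + 1) - nodeBox (nodeForm ι n d) r c
      = -rootForm A ι n r c := by
  rw [nodeBox, nodeBox, Nat.add_sub_cancel, nodeForm_of_le hcn, nodeForm_of_le hcn.le,
    nodeForm_of_le hcn.le, nodeForm_of_le (by omega), weight_of_lt hcn,
    weight_of_lt (show c - 1 < n by omega), rootForm, hA.succ_eq c hc hcn, hA.pred_eq c hc hcn]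
  push_cast
  module

theorem FoldedCartan.nodeBox_succ_sub_middle (hA : FoldedCartan n d A) (hn : 1 ≤ n) (r : ℤ) :
    nodeBox (nodeForm ι n d) r (n + 1) - nodeBox (nodeForm ι n d) r n
      = -(d • rootForm A ι n r n) := by
  have hend : shiftedCoord ι n r (n + 1) = 0 := xsj_of_notMem (by simp) _
  rw [nodeBox, nodeBox, Nat.add_sub_cancel, nodeForm_add hn, nodeForm_of_le le_rfl,
    nodeForm_of_le le_rfl, nodeForm_of_le (n.sub_le 1), nodeForm_of_le (n.sub_le 1),
    weight_of_lt (show n - 1 < n by omega), weight_self, rootForm, hend, Nat.cast_one]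
  have hlast : d • (A n (n - 1) : ℚ) • shiftedCoord ι n (r + 1) (n - 1)
      = (-2 : ℚ) • shiftedCoord ι n (r + 1) (n - 1) := by rw [smul_smul, hA.last_eq]
  rw [smul_add, smul_add, smul_add, hlast]
  module

theorem FoldedCartan.nodeBox_succ_sub_of_gt (hA : FoldedCartan n d A) {k : ℕ} (hk : 1 ≤ k)
    (hkn : k < n) (r : ℤ) :
    nodeBox (nodeForm ι n d) r (n + k + 1) - nodeBox (nodeForm ι n d) r (n + k)
      = -rootForm A ι n (r + k) (n - k) := by
  have hsucc : nodeForm ι n d r (n + k + 1) = shiftedCoord ι n (r + k + 1) (n - k - 1) := by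
    rw [add_assoc, nodeForm_add hkn, nodeForm_of_le (by omega), weight_of_lt (by omega), one_smul,
      Nat.cast_succ, add_assoc, Nat.sub_sub]
  have hself (r : ℤ) : nodeForm ι n d r (n + k) = shiftedCoord ι n (r + k) (n - k) := by
    rw [nodeForm_add hkn.le, nodeForm_of_le (by omega), weight_of_lt (by omega), one_smul]
  have hpred : nodeForm ι n d (r + 1) (n + k - 1)
      = weight n d (n - k + 1) • shiftedCoord ι n (r + k) (n - k + 1) := by
    rw [Nat.add_sub_assoc hk, nodeForm_add (by omega), nodeForm_of_le (by omega),
      show n - (k - 1) = n - k + 1 by omega, Nat.cast_pred hk]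
    congr 2
    ring
  rw [nodeBox, nodeBox, Nat.add_sub_cancel, hsucc, hself, hself, hpred, rootForm,
    hA.succ_eq _ (by omega) (by omega), hA.pred_eq _ (by omega) (by omega), add_right_comm r 1]
  push_cast
  module

theorem FoldedCartan.nodeBox_succ_sub (hA : FoldedCartan n d A) (hv : 1 ≤ v) (hvn : v < 2 * n)
    (r : ℤ) : nodeBox (nodeForm ι n d) r (v + 1) - nodeBox (nodeForm ι n d) r v
      = -(weight n d (foldNode n v) • rootForm A ι n (r + (v - n : ℕ)) (foldNode n v)) := by
  rcases le_or_gt n v with hnv | hlt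
  · obtain ⟨k, rfl⟩ := Nat.exists_eq_add_of_le hnv
    rw [foldNode_of_ge hnv, Nat.add_sub_cancel_left, show 2 * n - (n + k) = n - k by omega]
    rcases Nat.eq_zero_or_pos k with rfl | hk
    · simpa [weight_self] using hA.nodeBox_succ_sub_middle hv r
    · rw [hA.nodeBox_succ_sub_of_gt hk (by omega), weight_of_lt (by omega), one_smul]
  · rw [foldNode_of_le hlt.le, Nat.sub_eq_zero_of_le hlt.le, Nat.cast_zero, add_zero,
      weight_of_lt hlt, one_smul, hA.nodeBox_succ_sub_of_lt hv hlt]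

end FoldedCartan

section Signatures

variable {n : ℕ} {d : ℚ} {A : ℕ → ℕ → ℤ} {ι : ℕ → ℕ} {c m v w : ℕ} {s t : ℤ} {F F' : Finset ℕ}

/-- The coefficient with which the node `v` contributes the coordinate `x_{t+P(c),c}`, for the
letter `c` under `v`, to the column `F` of index `s`, up to the weight of `c`. -/
def signature (n : ℕ) (s t : ℤ) (F : Finset ℕ) (v : ℕ) : ℤ :=
  if s + above F v + (v - n : ℕ) = t then jump F v else 0

theorem signature_trichotomy (n : ℕ) (s t : ℤ) (F : Finset ℕ) (v : ℕ) :
    signature n s t F v = -1 ∨ signature n s t F v = 0 ∨ signature n s t F v = 1 := by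
  unfold signature jump
  split_ifs <;> simp

theorem signature_slide (hvw : v + 1 < w) :
    signature n s t (slide v F) w = signature n s t F w := by
  have hswap {e : ℕ} (he : w ≤ e) : e ∈ slide v F ↔ e ∈ F := by
    rw [mem_slide, Equiv.swap_apply_of_ne_of_ne (by omega) (by omega)]
  simp only [signature, jump, above_slide (show w ≠ v by omega), hswap le_rfl, hswap w.le_succ]

theorem Transversal.signature_eq (h : Transversal n F) (hc : 1 ≤ c) (hcn : c < n) :
    signature n s t F (2 * n - c) = signature n s t F c := by
  have habove := h.above_add (n.sub_le c)
  have hjump := h.jump_add (show n - c < n by omega)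
  rw [Nat.sub_sub_self hcn.le, show n + (n - c) = 2 * n - c by omega] at habove hjump
  rw [signature, signature, hjump]
  exact if_congr (by omega) rfl rfl

theorem columnSum_apply_occPos (hadm : Admissible n ι) (hc : c ∈ Icc 1 n) (hm : 1 ≤ m)
    (ht : t + PABC ι n c = m) (hF : F ⊆ Icc 1 (2 * n)) :
    columnSum (nodeBox (nodeForm ι n d)) s F (occPos ι c m)
      = weight n d c * (∑ v ∈ {c, 2 * n - c}, signature n s t F v : ℤ) := by
  have hfiber : (range (2 * n + 1)).filter (foldNode n · = c) = {c, 2 * n - c} := by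
    ext v
    rw [mem_Icc] at hc
    grind [foldNode]
  rw [columnSum_nodeBox _ s hF, ← hfiber, sum_filter, Finset.sum_apply, Int.cast_sum, mul_sum]
  refine sum_congr rfl fun v _ => ?_
  rw [Pi.smul_apply, nodeForm_apply_occPos hadm hc hm ht, ite_and, signature]
  split_ifs <;> simp [mul_comm]

theorem one_le_and_lt_of_foldNode_eq (hc : 1 ≤ c) (hv : foldNode n v = c) : 1 ≤ v ∧ v < 2 * n := by
  unfold foldNode at hv
  omega

theorem foldNode_two_mul_sub (hcn : c < n) : foldNode n (2 * n - c) = c := by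
  unfold foldNode
  omega

theorem FoldedCartan.columnSum_slide (hA : FoldedCartan n d A) (hc : 1 ≤ c)
    (hv : foldNode n v = c) (hε : signature n s t F v ≠ 0) :
    columnSum (nodeBox (nodeForm ι n d)) s (slide v F)
      = columnSum (nodeBox (nodeForm ι n d)) s F
        - (weight n d c * signature n s t F v)
          • rootForm A ι n (if 0 < signature n s t F v then t else t - 1) c := by
  obtain ⟨hv₁, hvn⟩ := one_le_and_lt_of_foldNode_eq hc hv
  obtain ⟨ht, hjump⟩ := ite_ne_right_iff.1 hε
  rw [signature, if_pos ht]
  by_cases h : v ∈ F <;> by_cases h' : v + 1 ∈ F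
  · simp [jump, h, h'] at hjump
  · rw [columnSum_slide_of_mem _ s h h', hA.nodeBox_succ_sub hv₁ hvn, ht, hv]
    simp [jump, h, h', sub_eq_add_neg]
  · rw [columnSum_slide_of_notMem _ s h h', hA.nodeBox_succ_sub hv₁ hvn,
      show s + above F v - 1 + (v - n : ℕ) = t - 1 by omega, hv]
    simp [jump, h, h']
  · simp [jump, h, h'] at hjump

theorem FoldedCartan.columnSum_slide_slide (hA : FoldedCartan n d A) (hc : 1 ≤ c) (hcn : c < n)
    (hε : signature n s t F c ≠ 0) (heq : signature n s t F (2 * n - c) = signature n s t F c) :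
    columnSum (nodeBox (nodeForm ι n d)) s (slide (2 * n - c) (slide c F))
      = columnSum (nodeBox (nodeForm ι n d)) s F - (2 * signature n s t F c : ℚ)
          • rootForm A ι n (if 0 < signature n s t F c then t else t - 1) c := by
  have heq' : signature n s t (slide c F) (2 * n - c) = signature n s t F c := by
    rw [signature_slide (by omega), heq]
  rw [hA.columnSum_slide hc (foldNode_two_mul_sub hcn) (heq' ▸ hε), heq',
    hA.columnSum_slide hc (foldNode_of_le hcn.le) hε, weight_of_lt hcn]
  module

/-- The sets of entries of the columns of type B. In type C the transversal ones stand for the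
columns that begin with `ovl(n+1)`, through `columnSum_boxC_insert_zero`. -/
structure IsColumn (n : ℕ) (F : Finset ℕ) : Prop where
  subset : F ⊆ Icc 1 (2 * n)
  nonempty : F.Nonempty
  card_le : #F ≤ n
  transversal : #F = n → Transversal n F

theorem slide_subset (hc : 1 ≤ c) (hv : foldNode n v = c) (hF : F ⊆ Icc 1 (2 * n)) :
    slide v F ⊆ Icc 1 (2 * n) := by
  intro e he
  have hv' := one_le_and_lt_of_foldNode_eq hc hv
  have := mem_Icc.1 (hF (mem_slide.1 he))
  rw [Equiv.swap_apply_def] at this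
  rw [mem_Icc]
  split_ifs at this <;> omega

theorem IsColumn.of_card_eq (hF : IsColumn n F) (hcard : #F' = #F) (hsub : F' ⊆ Icc 1 (2 * n))
    (htrans : #F = n → Transversal n F') : IsColumn n F' where
  subset := hsub
  nonempty := card_pos.1 (hcard ▸ card_pos.2 hF.nonempty)
  card_le := hcard ▸ hF.card_le
  transversal h := htrans (hcard ▸ h)

theorem IsColumn.slide_of_transversal (hF : IsColumn n F) (hc : 1 ≤ c) (hv : foldNode n v = c)
    (htrans : #F = n → Transversal n (slide v F)) : IsColumn n (slide v F) :=
  hF.of_card_eq (card_slide v F) (slide_subset hc hv hF.subset) htrans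

theorem FoldedCartan.exists_columnSum_last (hA : FoldedCartan n d A) (hF : IsColumn n F)
    (hn : 1 ≤ n) (s t : ℤ) :
    ∃ F', IsColumn n F' ∧ #F' = #F ∧ columnSum (nodeBox (nodeForm ι n d)) s F'
      = columnSum (nodeBox (nodeForm ι n d)) s F - (weight n d n * signature n s t F n)
        • rootForm A ι n (if 0 < signature n s t F n then t else t - 1) n := by
  by_cases hε : signature n s t F n = 0
  · exact ⟨F, hF, rfl, by simp [hε]⟩
  · exact ⟨slide n F, hF.slide_of_transversal hn (foldNode_of_le le_rfl)
      fun h => (hF.transversal h).slide_middle, card_slide n F,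
      hA.columnSum_slide hn (foldNode_of_le le_rfl) hε⟩

/-- The two nodes over a letter `c < n` contribute `0`, `1` or `2` of equal sign, or cancel. A
single contribution excludes transversal columns, whose two contributions agree. -/
theorem FoldedCartan.exists_columnSum_of_lt (hA : FoldedCartan n d A) (hF : IsColumn n F)
    (hc : 1 ≤ c) (hcn : c < n) {σ : ℤ}
    (hσ : σ = signature n s t F c + signature n s t F (2 * n - c)) :
    ∃ F', IsColumn n F' ∧ #F' = #F ∧ columnSum (nodeBox (nodeForm ι n d)) s F'
      = columnSum (nodeBox (nodeForm ι n d)) s F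
        - (σ : ℚ) • rootForm A ι n (if 0 < σ then t else t - 1) c := by
  have hlow := foldNode_of_le hcn.le
  have hhigh := foldNode_two_mul_sub hcn
  have hagree (h : #F = n) := (hF.transversal h).signature_eq (s := s) (t := t) hc hcn
  rcases eq_or_ne σ 0 with rfl | hσ₀
  · exact ⟨F, hF, rfl, by simp⟩
  rcases eq_or_ne (signature n s t F c) 0 with ha | ha
  · have hb : signature n s t F (2 * n - c) = σ := by rw [hσ, ha, zero_add]
    refine ⟨slide (2 * n - c) F, hF.slide_of_transversal hc hhigh fun h => ?_, card_slide _ F, ?_⟩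
    · exact absurd (hb.symm.trans ((hagree h).trans ha)) hσ₀
    · rw [hA.columnSum_slide hc hhigh (hb ▸ hσ₀), hb, weight_of_lt hcn, one_mul]
  rcases eq_or_ne (signature n s t F (2 * n - c)) 0 with hb | hb
  · rw [hb, add_zero] at hσ
    refine ⟨slide c F, hF.slide_of_transversal hc hlow fun h => ?_, card_slide _ F, ?_⟩
    · exact absurd ((hagree h).symm.trans hb) ha
    · rw [hA.columnSum_slide hc hlow ha, ← hσ, weight_of_lt hcn, one_mul]
  · have heq : signature n s t F (2 * n - c) = signature n s t F c := by
      have := signature_trichotomy n s t F c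
      have := signature_trichotomy n s t F (2 * n - c)
      omega
    have hcard : #(slide (2 * n - c) (slide c F)) = #F := by rw [card_slide, card_slide]
    refine ⟨slide (2 * n - c) (slide c F), hF.of_card_eq hcard
      (slide_subset hc hhigh (slide_subset hc hlow hF.subset))
      fun h => (hF.transversal h).slide_both hc hcn, hcard, ?_⟩
    have hpos : 0 < signature n s t F c ↔ 0 < σ := by omega
    rw [hA.columnSum_slide_slide hc hcn ha heq, if_congr hpos rfl rfl, hσ, heq, ← two_mul]
    push_cast
    rfl

theorem FoldedCartan.exists_columnSum_eq_sub (hA : FoldedCartan n d A) (hF : IsColumn n F)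
    (hc : c ∈ Icc 1 n) {σ : ℤ} (hσ : σ = ∑ v ∈ {c, 2 * n - c}, signature n s t F v) :
    ∃ F', IsColumn n F' ∧ #F' = #F ∧ columnSum (nodeBox (nodeForm ι n d)) s F'
      = columnSum (nodeBox (nodeForm ι n d)) s F
        - (weight n d c * σ) • rootForm A ι n (if 0 < σ then t else t - 1) c := by
  obtain ⟨hc₁, hcn⟩ := mem_Icc.1 hc
  rcases hcn.lt_or_eq with hlt | rfl
  · rw [sum_pair (by omega)] at hσ
    simpa only [weight_of_lt hlt, one_mul] using hA.exists_columnSum_of_lt hF hc₁ hlt hσ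
  · rw [show 2 * c - c = c by omega, pair_eq_singleton, sum_singleton] at hσ
    exact hσ ▸ hA.exists_columnSum_last hF hc₁ s t

theorem Sop_smul (A : ℕ → ℕ → ℤ) (ι : ℕ → ℕ) (k : ℕ) {q : ℚ} (hq : 0 < q) (φ : ℕ → ℚ) :
    Sop A ι k (q • φ) = q • Sop A ι k φ := by
  simp only [Sop, Pi.smul_apply, smul_eq_mul, mul_pos_iff_of_pos_left hq, smul_ite, smul_sub,
    mul_smul]

theorem FoldedCartan.Ssj_eq_self_or (hA : FoldedCartan n d A) (hd : d ≠ 0)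
    (hadm : Admissible n ι) (h : Adapted n A ι) (hc : c ∈ Icc 1 n) (hm : 1 ≤ m)
    (ht : t + PABC ι n c = m) (φ : ℕ → ℚ) :
    Ssj A ι m c φ = φ ∨ Ssj A ι m c φ = φ - φ (occPos ι c m)
      • rootForm A ι n (if 0 < φ (occPos ι c m) then t else t - 1) c := by
  rw [Ssj, Sop]
  split_ifs with hφ
  · exact .inr (by rw [hA.beta_occPos hd hadm h hc hm ht])
  · obtain ⟨u, rfl⟩ := Nat.exists_eq_add_of_le' hm
    rw [kminus_occPos_succ (hadm.frequently_eq (mem_Icc.1 hc).1 (mem_Icc.1 hc).2)]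
    rcases Nat.eq_zero_or_pos u with rfl | hu
    · exact .inl (by rw [occPos, beta, if_pos rfl, smul_zero, sub_zero])
    · exact .inr (by rw [hA.beta_occPos (t := t - 1) hd hadm h hc hu (by omega)])

theorem FoldedCartan.exists_Ssj_columnSum (hA : FoldedCartan n d A) (hd : 0 < d)
    (hadm : Admissible n ι) (h : Adapted n A ι) (hF : IsColumn n F) (hc : c ∈ Icc 1 n)
    (hm : 1 ≤ m) (s : ℤ) :
    ∃ F', IsColumn n F' ∧ #F' = #F ∧ Ssj A ι m c (columnSum (nodeBox (nodeForm ι n d)) s F)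
      = columnSum (nodeBox (nodeForm ι n d)) s F' := by
  have ht : (m - PABC ι n c : ℤ) + PABC ι n c = m := sub_add_cancel _ _
  rcases hA.Ssj_eq_self_or hd.ne' hadm h hc hm ht (columnSum (nodeBox (nodeForm ι n d)) s F)
    with hS | hS
  · exact ⟨F, hF, rfl, hS⟩
  · obtain ⟨F', hF', hcard, hsum⟩ :=
      hA.exists_columnSum_eq_sub (ι := ι) (s := s) (t := m - PABC ι n c) hF hc rfl
    refine ⟨F', hF', hcard, ?_⟩
    rw [hS, hsum, columnSum_apply_occPos hadm hc hm ht hF.subset]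
    simp only [mul_pos_iff_of_pos_left (weight_pos hd c), Int.cast_pos]

end Signatures

section Tableaux

variable {n : ℕ} {d : ℚ} {ι : ℕ → ℕ} {e i k : ℕ} {r : ℤ} {F : Finset ℕ} {f : ℕ → ℕ}
  {T : ℕ → ℚ}

theorem nodeBox_nodeForm_of_le (he : 1 ≤ e) (hen : e ≤ n) (r : ℤ) :
    nodeBox (nodeForm ι n d) r e
      = weight n d e • shiftedCoord ι n r e - shiftedCoord ι n (r + 1) (e - 1) := by
  rw [nodeBox, nodeForm_of_le hen, nodeForm_of_le (by omega),
    weight_of_lt (show e - 1 < n by omega), one_smul]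

theorem nodeBox_nodeForm_add (hi : 1 ≤ i) (hin : i ≤ n) (r : ℤ) :
    nodeBox (nodeForm ι n d) r (n + i) = shiftedCoord ι n (r + i) (n - i)
      - weight n d (n + 1 - i) • shiftedCoord ι n (r + i) (n + 1 - i) := by
  rw [nodeBox, nodeForm_add hin, nodeForm_of_le (n.sub_le i),
    weight_of_lt (show n - i < n by omega), one_smul, Nat.add_sub_assoc hi,
    nodeForm_add (by omega), nodeForm_of_le (n.sub_le _), show n - (i - 1) = n + 1 - i by omega,
    Nat.cast_pred hi, add_add_sub_cancel]

theorem boxB_eq_nodeBox (he : e ∈ Icc 1 (2 * n)) (r : ℤ) :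
    boxB ι n r e = nodeBox (nodeForm ι n 1) r e := by
  have hweight (c : ℕ) : weight n 1 c = 1 := ite_self _
  obtain ⟨he₁, he₂⟩ := mem_Icc.1 he
  rcases le_or_gt e n with hen | hlt
  · rw [boxB, if_pos hen, nodeBox_nodeForm_of_le he₁ hen, hweight, one_smul, shiftedCoord,
      shiftedCoord, add_right_comm r 1]
  · obtain ⟨i, rfl⟩ := Nat.exists_eq_add_of_le hlt.le
    rw [boxB, if_neg hlt.not_ge, nodeBox_nodeForm_add (by omega) (by omega), hweight, one_smul,
      shiftedCoord, shiftedCoord, show 2 * n - (n + i) = n - i by omega,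
      show 2 * n + 1 - (n + i) = n + 1 - i by omega]
    congr 2 <;> omega

theorem boxC_eq_nodeBox (he : e ∈ Icc 1 (2 * n)) (r : ℤ) :
    boxC ι n r e = nodeBox (nodeForm ι n 2) r e := by
  obtain ⟨he₁, he₂⟩ := mem_Icc.1 he
  rw [boxC, if_neg (by omega)]
  rcases lt_trichotomy e n with hlt | rfl | hgt
  · rw [if_pos hlt, nodeBox_nodeForm_of_le he₁ hlt.le, weight_of_lt hlt, one_smul, shiftedCoord,
      shiftedCoord, add_right_comm r 1]
  · rw [if_neg (lt_irrefl e), if_pos rfl, nodeBox_nodeForm_of_le he₁ le_rfl, weight_self,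
      shiftedCoord, shiftedCoord, add_right_comm r 1]
  · obtain ⟨i, rfl⟩ := Nat.exists_eq_add_of_le hgt.le
    rw [if_neg (by omega), if_neg (by omega), nodeBox_nodeForm_add (by omega) (by omega)]
    split_ifs with hi
    · obtain rfl : i = 1 := by omega
      rw [Nat.add_sub_cancel, weight_self, shiftedCoord, shiftedCoord, Nat.cast_one,
        add_right_comm r 1, add_right_comm r 1]
    · rw [weight_of_lt (by omega), one_smul, shiftedCoord, shiftedCoord,
        show 2 * n - (n + i) = n - i by omega, show 2 * n + 1 - (n + i) = n + 1 - i by omega]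
      congr 2 <;> omega

theorem columnSum_congr {M : Type*} [AddCommGroup M] {box box' : ℤ → ℕ → M}
    (h : ∀ e ∈ F, ∀ r, box r e = box' r e) (s : ℤ) : columnSum box s F = columnSum box' s F :=
  sum_congr rfl fun e he => h e he _

theorem strictMonoOn_Icc_iff :
    StrictMonoOn f (Icc i k : Finset ℕ) ↔ ∀ l, i ≤ l → l < k → f l < f (l + 1) := by
  rw [coe_Icc]
  refine ⟨fun hf l hil hlk => hf ⟨hil, hlk.le⟩ ⟨by omega, hlk⟩ l.lt_succ_self, fun hf => ?_⟩
  exact strictMonoOn_of_lt_add_one Set.ordConnected_Icc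
    fun l _ hl hl' => hf l hl.1 hl'.2

theorem card_image_Icc (hf : StrictMonoOn f (Icc 1 k : Finset ℕ)) : #((Icc 1 k).image f) = k := by
  rw [card_image_of_injOn hf.injOn, Nat.card_Icc, Nat.add_sub_cancel]

theorem isColumn_image_iff (hf : StrictMonoOn f (Icc 1 k : Finset ℕ)) :
    IsColumn n ((Icc 1 k).image f) ↔ 1 ≤ k ∧ k ≤ n ∧
      (∀ i, 1 ≤ i → i ≤ k → 1 ≤ f i ∧ f i ≤ 2 * n) ∧
      (k = n → ∀ l m, 1 ≤ l → l < m → m ≤ k → absJ n (f l) ≠ absJ n (f m)) := by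
  have hcard := card_image_Icc hf
  have hsub : (Icc 1 k).image f ⊆ Icc 1 (2 * n) ↔
      ∀ i, 1 ≤ i → i ≤ k → 1 ≤ f i ∧ f i ≤ 2 * n := by
    simp only [image_subset_iff, mem_Icc, and_imp]
  have hinj : Set.InjOn (absJ n) ((Icc 1 k).image f) ↔
      ∀ l m, 1 ≤ l → l < m → m ≤ k → absJ n (f l) ≠ absJ n (f m) := by
    simp only [coe_image, Set.InjOn, Set.forall_mem_image, coe_Icc, Set.mem_Icc]
    refine ⟨fun h l m hl hlm hmk he => ?_, fun h l hl m hm he => ?_⟩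
    · have := h ⟨hl, by omega⟩ ⟨by omega, hmk⟩ he
      exact (hf (by grind) (by grind) hlm).ne this
    · rcases lt_trichotomy l m with hlt | rfl | hlt
      · exact absurd he (h l m hl.1 hlt hm.2)
      · rfl
      · exact absurd he.symm (h m l hm.1 hlt hl.2)
  have hpos : ((Icc 1 k).image f).Nonempty ↔ 1 ≤ k := by
    rw [image_nonempty, nonempty_Icc]
  refine ⟨fun h => ⟨hpos.1 h.nonempty, hcard ▸ h.card_le, hsub.1 h.subset, fun hk => ?_⟩,
    fun ⟨h₁, h₂, h₃, h₄⟩ => ⟨hsub.2 h₃, hpos.2 h₁, hcard.symm ▸ h₂, fun hk => ?_⟩⟩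
  · exact hinj.1 ((injOn_absJ_iff_transversal h.subset (hcard.trans hk)).2
      (h.transversal (hcard.trans hk)))
  · exact (injOn_absJ_iff_transversal (hsub.2 h₃) hk).1 (hinj.2 (h₄ (hcard.symm.trans hk)))

theorem mem_TabB_iff : T ∈ TabB ι n ↔ ∃ s F, (IsColumn n F ∧ 1 - (PABC ι n #F : ℤ) ≤ s) ∧
    T = columnSum (nodeBox (nodeForm ι n 1)) s F := by
  have hbox (s : ℤ) (F : Finset ℕ) (hF : IsColumn n F) :
      columnSum (boxB ι n) s F = columnSum (nodeBox (nodeForm ι n 1)) s F :=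
    columnSum_congr (fun e he r => boxB_eq_nodeBox (hF.subset he) r) s
  calc T ∈ TabB ι n
      ↔ ∃ s F, (IsColumn n F ∧ 1 - (PABC ι n #F : ℤ) ≤ s) ∧ T = columnSum (boxB ι n) s F := by
        rw [← exists_tab_iff]
        refine exists_congr fun k => exists_congr fun s => exists_congr fun f => ?_
        rw [← strictMonoOn_Icc_iff]
        by_cases hf : StrictMonoOn f (Icc 1 k : Finset ℕ)
        · rw [isColumn_image_iff hf, card_image_Icc hf]
          tauto
        · tauto
    _ ↔ _ := exists_congr fun s => exists_congr fun F =>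
        and_congr_right fun hF => by rw [hbox s F hF.1]

theorem columnSum_boxC_insert_zero (h : Transversal n F) (hn : 1 ≤ n) (hF : F ⊆ Icc 1 (2 * n))
    (s : ℤ) : columnSum (boxC ι n) s (insert 0 {e ∈ F | n < e})
      = (2⁻¹ : ℚ) • columnSum (nodeBox (nodeForm ι n 2)) s F := by
  set G : Finset ℕ := {e ∈ F | n < e} with hG
  have hzero : 0 ∉ G := by simp [hG]
  have habove (e : ℕ) : above (insert 0 G) e = above G e := by
    rw [above, filter_insert, if_neg e.not_lt_zero, above]
  have htop : above G 0 = above F n := by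
    rw [above, filter_true_of_mem fun e he => Nat.pos_of_ne_zero (ne_of_mem_of_not_mem he hzero)]
    rfl
  have hrest : ∑ e ∈ G, boxC ι n (s + above (insert 0 G) e) e
      = columnSum (nodeBox (nodeForm ι n 2)) s G := by
    refine sum_congr rfl fun e he => ?_
    rw [habove, boxC_eq_nodeBox (hF (mem_of_mem_filter e he))]
  have hspin : boxC ι n (s + above F n) 0 = (2⁻¹ : ℚ) • nodeForm ι n 2 (s + above F n) n := by
    rw [boxC, if_pos rfl, nodeForm_of_le le_rfl, weight_self, inv_smul_smul₀ two_ne_zero,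
      shiftedCoord]
  rw [columnSum, sum_insert hzero, habove, htop, hrest, hspin,
    h.columnSum_nodeBox_eq hn hF nodeForm_zero fun r i => nodeForm_add]
  module

theorem strictMonoOn_and_image_eq_insert_zero_iff :
    (StrictMonoOn f (Icc 1 k : Finset ℕ) ∧
      ∃ G ⊆ Icc (n + 1) (2 * n), (Icc 1 k).image f = insert 0 G) ↔
    f 1 = 0 ∧ 1 ≤ k ∧ k ≤ n + 1 ∧ (∀ i, 2 ≤ i → i ≤ k → n + 1 ≤ f i ∧ f i ≤ 2 * n) ∧
      ∀ i, 2 ≤ i → i < k → f i < f (i + 1) := by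
  constructor
  · rintro ⟨hf, G, hG, himage⟩
    obtain ⟨i, hi, hfi⟩ := mem_image.1 (himage ▸ mem_insert_self 0 G)
    obtain ⟨hi₁, hik⟩ := mem_Icc.1 hi
    have hone : 1 ∈ Icc 1 k := left_mem_Icc.2 (hi₁.trans hik)
    have hf₁ : f 1 = 0 := Nat.le_zero.1 (hfi ▸ hf.monotoneOn hone hi hi₁)
    refine ⟨hf₁, hi₁.trans hik, ?_, fun l hl hlk => ?_, fun l hl =>
      strictMonoOn_Icc_iff.1 hf l (by omega)⟩
    · calc k = #(insert 0 G) := by rw [← himage, card_image_Icc hf]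
        _ ≤ #(Icc (n + 1) (2 * n)) + 1 := (card_insert_le 0 G).trans (by gcongr)
        _ = n + 1 := by rw [Nat.card_Icc]; omega
    · have hl' : l ∈ Icc 1 k := mem_Icc.2 ⟨by omega, hlk⟩
      have hne : f l ≠ 0 := (hf₁ ▸ hf hone hl' (by omega)).ne'
      exact mem_Icc.1 (hG (mem_of_mem_insert_of_ne (himage ▸ mem_image_of_mem f hl') hne))
  · rintro ⟨h₀, hk, -, hmem, hlt⟩
    refine ⟨strictMonoOn_Icc_iff.2 fun i hi hik => ?_, (Icc 2 k).image f, ?_, ?_⟩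
    · rcases hi.eq_or_lt with rfl | hi
      · exact h₀ ▸ Nat.lt_of_lt_of_le n.succ_pos (hmem (1 + 1) le_rfl hik).1
      · exact hlt i hi hik
    · simpa only [image_subset_iff, mem_Icc, and_imp] using hmem
    · rw [← h₀, ← image_insert]
      congr 1
      grind

theorem mem_TabC_iff_columnSum_boxC : T ∈ TabC ι n ↔
    (∃ s F, (IsColumn n F ∧ #F ≠ n ∧ 1 - (PABC ι n #F : ℤ) ≤ s) ∧ T = columnSum (boxC ι n) s F) ∨
      ∃ s F, ((∃ G ⊆ Icc (n + 1) (2 * n), F = insert 0 G) ∧ 1 - (PABC ι n n : ℤ) ≤ s) ∧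
        T = columnSum (boxC ι n) s F := by
  rw [← exists_tab_iff, ← exists_tab_iff]
  simp only [← exists_or]
  refine exists_congr fun k => exists_congr fun s => exists_congr fun f => ?_
  have hspin := strictMonoOn_and_image_eq_insert_zero_iff (n := n) (f := f) (k := k)
  rw [TabCcond, or_and_right, ← strictMonoOn_Icc_iff]
  refine or_congr ?_ (by grind)
  by_cases hf : StrictMonoOn f (Icc 1 k : Finset ℕ)
  · rw [isColumn_image_iff hf, card_image_Icc hf]
    have hk : 1 ≤ k ∧ k ≤ n - 1 ↔ 1 ≤ k ∧ k ≤ n ∧ k ≠ n := by omega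
    tauto
  · tauto

theorem mem_TabC_iff (hn : 1 ≤ n) : T ∈ TabC ι n ↔
    ∃ s F, (IsColumn n F ∧ 1 - (PABC ι n #F : ℤ) ≤ s) ∧
      T = (if #F = n then 2⁻¹ else 1 : ℚ) • columnSum (nodeBox (nodeForm ι n 2)) s F := by
  have hbox (s : ℤ) (F : Finset ℕ) (hF : IsColumn n F) :
      columnSum (boxC ι n) s F = columnSum (nodeBox (nodeForm ι n 2)) s F :=
    columnSum_congr (fun e he r => boxC_eq_nodeBox (hF.subset he) r) s
  rw [mem_TabC_iff_columnSum_boxC]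
  constructor
  · rintro (⟨s, F, ⟨hF, hne, hs⟩, rfl⟩ | ⟨s, _, ⟨⟨G, hG, rfl⟩, hs⟩, rfl⟩)
    · exact ⟨s, F, ⟨hF, hs⟩, by rw [if_neg hne, one_smul, hbox s F hF]⟩
    · have htrans := transversal_completion hG
      have hsub := completion_subset hG
      have hcard := htrans.card_eq hsub
      refine ⟨s, completion n G, ⟨⟨hsub, card_pos.1 (by omega), hcard.le, fun _ => htrans⟩,
        hcard.symm ▸ hs⟩, ?_⟩
      rw [if_pos hcard, ← columnSum_boxC_insert_zero htrans hn hsub, filter_lt_completion hG]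
  · rintro ⟨s, F, ⟨hF, hs⟩, rfl⟩
    by_cases hcard : #F = n
    · refine .inr ⟨s, _, ⟨⟨{e ∈ F | n < e}, fun e he => ?_, rfl⟩, hcard ▸ hs⟩, ?_⟩
      · rw [mem_filter] at he
        exact mem_Icc.2 ⟨he.2, (mem_Icc.1 (hF.subset he.1)).2⟩
      · rw [if_pos hcard, columnSum_boxC_insert_zero (hF.transversal hcard) hn hF.subset]
    · exact .inl ⟨s, F, ⟨hF, hcard, hs⟩, by rw [if_neg hcard, one_smul, hbox s F hF]⟩

end Tableaux

/-- Proposition 4.2 (closure): for adapted sequences of type B or C, the sets `Tab_{B,ι}`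
and `Tab_{C,ι}` are closed under all operators `S_{m,j}`. -/
theorem Tab_BC_closed (n : ℕ) (hn : 2 ≤ n) (ι : ℕ → ℕ) (hadm : Admissible n ι) :
    (Adapted n (cartanB n) ι →
      ∀ T ∈ TabB ι n, ∀ m j, 1 ≤ m → 1 ≤ j → j ≤ n →
        Ssj (cartanB n) ι m j T ∈ TabB ι n) ∧
    (Adapted n (cartanC n) ι →
      ∀ T ∈ TabC ι n, ∀ m j, 1 ≤ m → 1 ≤ j → j ≤ n →
        Ssj (cartanC n) ι m j T ∈ TabC ι n) := by
  refine ⟨fun h T hT m j hm hj hjn => ?_, fun h T hT m j hm hj hjn => ?_⟩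
  · obtain ⟨s, F, ⟨hF, hs⟩, rfl⟩ := mem_TabB_iff.1 hT
    obtain ⟨F', hF', hcard, hS⟩ := (foldedCartan_cartanB hn).exists_Ssj_columnSum one_pos hadm h hF
      (mem_Icc.2 ⟨hj, hjn⟩) hm s
    exact mem_TabB_iff.2 ⟨s, F', ⟨hF', hcard ▸ hs⟩, hS⟩
  · obtain ⟨s, F, ⟨hF, hs⟩, rfl⟩ := (mem_TabC_iff (by omega)).1 hT
    obtain ⟨F', hF', hcard, hS⟩ := (foldedCartan_cartanC hn).exists_Ssj_columnSum two_pos hadm h hF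
      (mem_Icc.2 ⟨hj, hjn⟩) hm s
    refine (mem_TabC_iff (by omega)).2 ⟨s, F', ⟨hF', hcard ▸ hs⟩, ?_⟩
    rw [Ssj, Sop_smul _ _ _ (by split_ifs <;> norm_num), ← Ssj, hS, hcard]
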